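/- Let k be a field of characteristic 0 and n = 8. The k-vector space R_{(1,1,1,1,1,1,1,1)} of SL₂(k)-invariant multihomogeneous polynomials of multidegree (1,1,1,1,1,1,1,1) has dimension 14. (This is the degree 1 piece of the graded ring whose Proj is the GIT quotient M₈ = (ℙ¹)⁸ // Aut(ℙ¹), which therefore naturally lies in ℙ¹³.) -/

import Mathlib

/-!
A multilinear form `f` in eight points of `k²` is determined by its values `f(e_S)`,
`S ⊆ {1,…,8}`, where `e_S` puts the second basis vector at the places of `S` and the first one
elsewhere (`eval_eq_sum`).

Upper bound. If `f` is invariant, the torus element `diag(2, 1/2)` forces `f(e_S) = 0` unless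
`|S| = 4` (`eval_pt_eq_zero`), and the unipotent element `((1,0),(1,1))` then gives
`∑_{S ⊂ T, |S| = 4} f(e_S) = 0` for every 5-set `T` (`sum_eval_pt`). The 56 × 70 inclusion matrix
of 4-sets in 5-sets has an explicit right inverse up to the factor 60, whose entries depend only
on `|S ∩ T|` (`incl_mul_inv`), so these equations are independent and the dimension is at most
`70 - 56 = 14`.

Lower bound. Each of the 14 non-crossing perfect matchings of eight points gives a product of four
brackets, which is an invariant of multidegree `(1,…,1)`. Evaluating the product of the `m`-th
matching at the point `e_S` with `S` the set of right endpoints of the `m'`-th matching gives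
a unitriangular matrix (`det_entry`), so the 14 products are linearly independent.
-/

open MvPolynomial

/-- The polynomial ring `A = k[x_1, y_1, …, x_n, y_n]`: variable `(i, 0)` is `x_i`
and `(i, 1)` is `y_i`. -/
abbrev PtRing (k : Type) [CommRing k] (n : ℕ) := MvPolynomial (Fin n × Fin 2) k

/-- The bracket `[ab] = x_a y_b − x_b y_a`. -/
noncomputable def bracket (k : Type) [CommRing k] (n : ℕ) (a b : Fin n) : PtRing k n :=
  X (a, 0) * X (b, 1) - X (b, 0) * X (a, 1)

/-- The graph monomial `m_Γ = ∏_{(a,b) ∈ Γ} [ab]` of a directed graph `Γ`,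
viewed as a multiset of directed edges. -/
noncomputable def graphMonomial (k : Type) [CommRing k] (n : ℕ)
    (Γ : Multiset (Fin n × Fin n)) : PtRing k n :=
  (Γ.map fun e => bracket k n e.1 e.2).prod

/-- The `k`-algebra endomorphism of `A` induced by a `2×2` matrix `g = ((p,q),(r,s))`:
`x_i ↦ p·x_i + r·y_i` and `y_i ↦ q·x_i + s·y_i`. -/
noncomputable def subst (k : Type) [CommRing k] (n : ℕ) (g : Matrix (Fin 2) (Fin 2) k) :
    PtRing k n →ₐ[k] PtRing k n :=
  aeval fun p =>
    if p.2 = 0 then C (g 0 0) * X (p.1, 0) + C (g 1 0) * X (p.1, 1)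
    else C (g 0 1) * X (p.1, 0) + C (g 1 1) * X (p.1, 1)

/-- The valence vector of a directed graph: the `i`-th entry is the number of edges
(with multiplicity) having `i` as an endpoint. -/
def valence (n : ℕ) (Γ : Multiset (Fin n × Fin n)) : Fin n → ℕ :=
  fun i => (Γ.map Prod.fst).count i + (Γ.map Prod.snd).count i

/-- `R_v`: the space of `SL₂(k)`-invariant multihomogeneous polynomials of multidegree `v`. -/
noncomputable def Rv (k : Type) [CommRing k] (n : ℕ) (v : Fin n → ℕ) :
    Submodule k (PtRing k n) :=
  (⨅ g : Matrix.SpecialLinearGroup (Fin 2) k,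
      LinearMap.ker ((subst k n (g : Matrix (Fin 2) (Fin 2) k)).toLinearMap
        - (LinearMap.id : PtRing k n →ₗ[k] PtRing k n))) ⊓
  weightedHomogeneousSubmodule k (fun p : Fin n × Fin 2 => Finsupp.single p.1 1)
    (Finsupp.equivFunOnFinite.symm v)

/-! ### Values at coordinate points -/

/-- The point `e_S` of `(k²)⁸`: its `i`-th component is `(0, 1)` for `i ∈ S` and `(1, 0)`
otherwise. -/
def pt (k : Type) [CommRing k] (S : Finset (Fin 8)) : Fin 8 × Fin 2 → k :=
  fun q => if q.2 = 0 then (if q.1 ∈ S then 0 else 1) else (if q.1 ∈ S then 1 else 0)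

/-- A form of multidegree `(1,…,1)` is multilinear, hence is recovered from its values at the
points `e_S`. -/
theorem eval_eq_sum (k : Type) [Field k] (f : PtRing k 8)
    (hf : f ∈ weightedHomogeneousSubmodule k (fun p : Fin 8 × Fin 2 => Finsupp.single p.1 1)
      (Finsupp.equivFunOnFinite.symm fun _ => 1)) (p : Fin 8 × Fin 2 → k) :
    eval p f = ∑ S : Finset (Fin 8), eval (pt k S) f *
      ((∏ i ∈ S, p (i, 1)) * ∏ i ∈ Sᶜ, p (i, 0)) := by
  have key : ∀ d ∈ f.support, ∀ i, d (i, 0) + d (i, 1) = 1 := by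
    intro d hd i
    have h := hf (mem_support_iff.mp hd)
    have h2 := DFunLike.congr_fun h i
    rw [Finsupp.weight_apply, Finsupp.sum_fintype _ _ (by simp)] at h2
    simpa [Finsupp.finsetSum_apply, Fintype.sum_prod_type, Finsupp.single_apply,
      Finset.sum_add_distrib] using h2
  simp only [eval_eq', Finset.sum_mul]
  rw [Finset.sum_comm]
  refine Finset.sum_congr rfl fun d hd => ?_
  have e : ∀ q : Fin 8 × Fin 2 → k, ∏ i, q i ^ d i
      = ∏ i, (q (i, 0) ^ d (i, 0) * q (i, 1) ^ d (i, 1)) := fun q => by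
    rw [Fintype.prod_prod_type]; simp
  simp only [mul_assoc, ← Finset.mul_sum]
  congr 1
  -- Both sides equal `∏ i, (0 ^ d (i, 0) * p (i, 1) + 0 ^ d (i, 1) * p (i, 0))`.
  have h1 : ∏ i, p i ^ d i
      = ∏ i, ((0 : k) ^ d (i, 0) * p (i, 1) + (0 : k) ^ d (i, 1) * p (i, 0)) := by
    rw [e]
    refine Finset.prod_congr rfl fun i _ => ?_
    have := key d hd i
    rcases (by omega : (d (i, 0) = 0 ∧ d (i, 1) = 1) ∨ (d (i, 0) = 1 ∧ d (i, 1) = 0)) with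
      ⟨a, b⟩ | ⟨a, b⟩ <;> simp [a, b]
  rw [h1, Fintype.prod_add]
  refine Finset.sum_congr rfl fun S _ => ?_
  rw [e, ← Finset.prod_mul_prod_compl S, Finset.prod_mul_distrib, Finset.prod_mul_distrib]
  have h2 : ∏ i ∈ S, (pt k S (i, 0) ^ d (i, 0) * pt k S (i, 1) ^ d (i, 1))
      = ∏ i ∈ S, (0 : k) ^ d (i, 0) :=
    Finset.prod_congr rfl fun i hi => by simp [pt, hi]
  have h3 : ∏ i ∈ Sᶜ, (pt k S (i, 0) ^ d (i, 0) * pt k S (i, 1) ^ d (i, 1))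
      = ∏ i ∈ Sᶜ, (0 : k) ^ d (i, 1) :=
    Finset.prod_congr rfl fun i hi => by
      simp [pt, Finset.mem_compl.mp hi]
  rw [h2, h3]
  ring

/-! ### Consequences of invariance -/

theorem eval_subst (k : Type) [Field k] (g : Matrix (Fin 2) (Fin 2) k) (f : PtRing k 8)
    (p : Fin 8 × Fin 2 → k) :
    eval p (subst k 8 g f) = eval (fun q => if q.2 = 0 then g 0 0 * p (q.1, 0) + g 1 0 * p (q.1, 1)
      else g 0 1 * p (q.1, 0) + g 1 1 * p (q.1, 1)) f := by
  have : (aeval p).comp (subst k 8 g) = (aeval fun q : Fin 8 × Fin 2 =>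
      if q.2 = 0 then g 0 0 * p (q.1, 0) + g 1 0 * p (q.1, 1)
      else g 0 1 * p (q.1, 0) + g 1 1 * p (q.1, 1) : PtRing k 8 →ₐ[k] k) := by
    apply MvPolynomial.algHom_ext
    intro q
    by_cases h : q.2 = 0 <;> simp [subst, h]
  have h := DFunLike.congr_fun this f
  simpa [coe_aeval_eq_eval] using h

theorem eval_invariant (k : Type) [Field k] {f : PtRing k 8} (hf : f ∈ Rv k 8 fun _ => 1)
    (a b c d : k) (hg : a * d - b * c = 1) (p : Fin 8 × Fin 2 → k) :
    ∃ q : Fin 8 × Fin 2 → k, (∀ i, q (i, 0) = a * p (i, 0) + c * p (i, 1)) ∧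
      (∀ i, q (i, 1) = b * p (i, 0) + d * p (i, 1)) ∧ eval q f = eval p f := by
  have h := (Submodule.mem_iInf _).mp hf.1 ⟨!![a, b; c, d], by rw [Matrix.det_fin_two_of, hg]⟩
  rw [LinearMap.mem_ker, LinearMap.sub_apply, sub_eq_zero] at h
  exact ⟨_, fun i => by simp, fun i => by simp,
    (eval_subst k !![a, b; c, d] f p).symm.trans (congrArg (eval p) h)⟩

theorem eval_pt_eq_zero (k : Type) [Field k] [CharZero k] {f : PtRing k 8}
    (hf : f ∈ Rv k 8 fun _ => 1) (S : Finset (Fin 8)) (hS : S.card ≠ 4) :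
    eval (pt k S) f = 0 := by
  obtain ⟨q, hq0, hq1, h⟩ := eval_invariant k hf 2 0 0 2⁻¹ (by simp) (pt k S)
  rw [eval_eq_sum k f hf.2, Finset.sum_eq_single S] at h
  · have h1 : ∀ i ∈ S, q (i, 1) = 2⁻¹ := fun i hi => by simp [hq1, pt, hi]
    have h2 : ∀ i ∈ Sᶜ, q (i, 0) = 2 := fun i hi => by simp [hq0, pt, Finset.mem_compl.mp hi]
    rw [Finset.prod_congr rfl h1, Finset.prod_congr rfl h2, Finset.prod_const, Finset.prod_const,
      Finset.card_compl, Fintype.card_fin] at h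
    have hc : S.card ≤ 8 := by simpa using Finset.card_le_univ S
    by_contra h0
    have h' := mul_left_cancel₀ h0 (h.trans (mul_one _).symm)
    generalize S.card = c at *
    interval_cases c <;> first | exact hS rfl | norm_num at h'
  · intro S' _ hne
    -- The values at sets other than `S` do not contribute, a torus element being diagonal.
    have : ∃ i, ¬ (i ∈ S' ↔ i ∈ S) := by
      by_contra hcon
      push Not at hcon
      exact hne (Finset.ext hcon)
    obtain ⟨i, hi⟩ := this
    by_cases hi' : i ∈ S'
    · rw [Finset.prod_eq_zero hi' (by simp_all [pt])]; simp
    · rw [Finset.prod_eq_zero (s := S'ᶜ) (i := i) (by simpa using hi') (by simp_all [pt])]; simp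
  · simp

theorem sum_four (k : Type) [Field k] (T : Finset (Fin 8)) (c : Finset (Fin 8) → k) :
    ∑ S : {S : Finset (Fin 8) // S.card = 4}, (if S.1 ⊆ T then c S.1 else 0)
      = ∑ S ∈ T.powersetCard 4, c S := by
  rw [← Finset.sum_subtype (Finset.univ.filter fun S : Finset (Fin 8) => S.card = 4) (by simp)
    (fun S => if S ⊆ T then c S else 0), ← Finset.sum_filter]
  refine Finset.sum_congr ?_ fun _ _ => rfl
  ext S
  simp [Finset.mem_powersetCard, and_comm]

theorem sum_eval_pt (k : Type) [Field k] [CharZero k] {f : PtRing k 8}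
    (hf : f ∈ Rv k 8 fun _ => 1) (T : Finset (Fin 8)) (hT : T.card = 5) :
    ∑ S : {S : Finset (Fin 8) // S.card = 4},
      (if S.1 ⊆ T then eval (pt k S.1) f else 0) = 0 := by
  obtain ⟨q, hq0, hq1, h⟩ := eval_invariant k hf 1 0 1 1 (by simp) (pt k T)
  rw [eval_pt_eq_zero k hf T (by omega), eval_eq_sum k f hf.2] at h
  rw [sum_four k T fun S => eval (pt k S) f, ← h]
  -- The coefficient of `f(e_S)` in `h` is 1 if `S ⊆ T` and 0 otherwise.
  have h1 : ∀ i, q (i, 1) = if i ∈ T then 1 else 0 := fun i => by simp [hq1, pt]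
  have h0 : ∀ i, q (i, 0) = 1 := fun i => by by_cases hi : i ∈ T <;> simp [hq0, pt, hi]
  have e : ∀ S : Finset (Fin 8),
      (∏ i ∈ S, q (i, 1)) * ∏ i ∈ Sᶜ, q (i, 0) = if S ⊆ T then 1 else 0 := by
    intro S
    simp only [h1, h0, Finset.prod_const_one, mul_one]
    split_ifs with hST
    · exact Finset.prod_eq_one fun i hi => by simp [hST hi]
    · obtain ⟨i, hi, hi'⟩ := Finset.not_subset.mp hST
      exact Finset.prod_eq_zero hi (by simp [hi'])
  refine Finset.sum_congr_of_eq_on_inter ?_ ?_ ?_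
  · simp
  · intro S _ hS
    rw [e S]
    rw [Finset.mem_powersetCard, not_and_or] at hS
    rcases hS with hS | hS
    · simp [hS]
    · rw [eval_pt_eq_zero k hf S hS, zero_mul]
  · intro S hS _
    rw [e S,
      if_pos (Finset.mem_powersetCard.mp hS).1, mul_one]

/-! ### The inclusion matrix of 4-sets in 5-sets -/

/-- The inclusion matrix of the 4-subsets in the 5-subsets of an 8-element set. -/
def incl (k : Type) [Field k] :
    Matrix {T : Finset (Fin 8) // T.card = 5} {S : Finset (Fin 8) // S.card = 4} k :=
  fun T S => if S.1 ⊆ T.1 then 1 else 0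

/-- Solution of `j * a (j - 1) + (5 - j) * a j = 60 * δ_{j,5}` for `2 ≤ j ≤ 5`. -/
def invCoeff (k : Type) [Field k] : ℕ → k
  | 1 => -3
  | 2 => 2
  | 3 => -3
  | 4 => 12
  | _ => 0

theorem sum_invCoeff (k : Type) [Field k] (T T' : Finset (Fin 8)) (hT : T.card = 5)
    (hT' : T'.card = 5) :
    ∑ i ∈ T, invCoeff k ((T.erase i) ∩ T').card = if T = T' then 60 else 0 := by
  have h1 : ∀ i ∈ T, invCoeff k ((T.erase i) ∩ T').card
      = if i ∈ T' then invCoeff k ((T ∩ T').card - 1) else invCoeff k (T ∩ T').card := by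
    intro i hi
    split_ifs with h
    · rw [Finset.erase_inter, Finset.card_erase_of_mem (by simp [hi, h])]
    · rw [Finset.erase_inter, Finset.erase_eq_of_notMem (by simp [h])]
  rw [Finset.sum_congr rfl h1, Finset.sum_ite, Finset.sum_const, Finset.sum_const,
    Finset.filter_mem_eq_inter, Finset.filter_notMem_eq_sdiff]
  have h2 := Finset.card_sdiff_add_card_inter T T'
  have h3 := Finset.card_union_add_card_inter T T'
  have h4 : (T ∪ T').card ≤ 8 := by simpa using Finset.card_le_univ (T ∪ T')
  have h5 : T = T' ↔ (T ∩ T').card = 5 := by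
    constructor
    · rintro rfl; simpa
    · intro h
      have a := Finset.eq_of_subset_of_card_le (Finset.inter_subset_left (s₁ := T) (s₂ := T'))
        (by omega)
      have b := Finset.eq_of_subset_of_card_le (Finset.inter_subset_right (s₁ := T) (s₂ := T'))
        (by omega)
      exact a.symm.trans b
  simp only [h5]
  have h6 : (T \ T').card = 5 - (T ∩ T').card := by omega
  rw [h6]
  generalize (T ∩ T').card = j at *
  have : 2 ≤ j := by omega
  have : j ≤ 5 := by omega
  interval_cases j <;> norm_num [invCoeff]

/-- A right inverse of `incl` up to the factor 60. -/
def scaledInv (k : Type) [Field k] :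
    Matrix {S : Finset (Fin 8) // S.card = 4} {T : Finset (Fin 8) // T.card = 5} k :=
  fun S T => invCoeff k (S.1 ∩ T.1).card

theorem incl_mul_inv (k : Type) [Field k] :
    incl k * scaledInv k = (60 : k) • (1 : Matrix _ _ k) := by
  ext T T'
  have hpow : T.1.powersetCard 4 = T.1.image T.1.erase := by
    ext S
    simp only [Finset.mem_powersetCard, Finset.mem_image]
    constructor
    · rintro ⟨hS, hc⟩
      obtain ⟨i, hi, hi'⟩ := Finset.exists_mem_notMem_of_card_lt_card
        (show S.card < T.1.card by rw [hc, T.2]; norm_num)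
      refine ⟨i, hi, (Finset.eq_of_subset_of_card_le ?_ ?_).symm⟩
      · exact Finset.subset_erase.mpr ⟨hS, hi'⟩
      · rw [Finset.card_erase_of_mem hi, T.2, hc]
    · rintro ⟨i, hi, rfl⟩
      exact ⟨Finset.erase_subset _ _, by rw [Finset.card_erase_of_mem hi, T.2]⟩
  have hinj : Set.InjOn T.1.erase T.1 := Finset.erase_injOn T.1
  have h := sum_invCoeff k T.1 T'.1 T.2 T'.2
  rw [← Finset.sum_image (f := fun S => invCoeff k (S ∩ T'.1).card) hinj, ← hpow] at h
  rw [Matrix.mul_apply]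
  simp only [incl, scaledInv, ite_mul, one_mul, zero_mul, Matrix.smul_apply,
    Matrix.one_apply, smul_eq_mul, mul_ite, mul_one, mul_zero, Subtype.ext_iff]
  rw [← h]
  exact sum_four k T.1 fun S => invCoeff k (S ∩ T'.1).card

theorem finrank_ker_incl (k : Type) [Field k] [CharZero k] :
    Module.finrank k (LinearMap.ker (incl k).mulVecLin) = 14 := by
  have hs : LinearMap.range (incl k).mulVecLin = ⊤ := by
    rw [LinearMap.range_eq_top]
    intro b
    refine ⟨(scaledInv k).mulVec ((60 : k)⁻¹ • b), ?_⟩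
    rw [Matrix.mulVecLin_apply, Matrix.mulVec_mulVec, incl_mul_inv, Matrix.smul_mulVec,
      Matrix.one_mulVec, smul_smul, mul_inv_cancel₀ (by norm_num), one_smul]
  have h := LinearMap.finrank_range_add_finrank_ker (incl k).mulVecLin
  rw [hs, finrank_top, Module.finrank_fintype_fun_eq_card, Module.finrank_fintype_fun_eq_card,
    Fintype.card_finset_len, Fintype.card_finset_len, Fintype.card_fin] at h
  have e1 : Nat.choose 8 5 = 56 := by decide
  have e2 : Nat.choose 8 4 = 70 := by decide
  omega

/-- The vector of values `f(e_S)`, `|S| = 4`, of an invariant `f`. -/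
noncomputable def values (k : Type) [Field k] [CharZero k] :
    ↥(Rv k 8 fun _ => 1) →ₗ[k] LinearMap.ker (incl k).mulVecLin where
  toFun f := ⟨fun S => eval (pt k S.1) f.1, by
    rw [LinearMap.mem_ker]
    ext T
    simpa [Matrix.mulVec, dotProduct, incl] using sum_eval_pt k f.2 T.1 T.2⟩
  map_add' f g := by ext; simp
  map_smul' c f := by ext; simp

theorem values_injective (k : Type) [Field k] [CharZero k] :
    Function.Injective (values k) := by
  rw [injective_iff_map_eq_zero]
  intro f hf
  apply Subtype.ext
  apply MvPolynomial.funext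
  intro p
  rw [eval_eq_sum k f.1 f.2.2]
  simp only [ZeroMemClass.coe_zero, map_zero]
  refine Finset.sum_eq_zero fun S _ => ?_
  by_cases hS : S.card = 4
  · have : eval (pt k S) f.1 = 0 := congrFun (congrArg Subtype.val hf) ⟨S, hS⟩
    rw [this, zero_mul]
  · rw [eval_pt_eq_zero k f.2 S hS, zero_mul]

/-! ### Non-crossing matchings -/

/-- The 14 non-crossing perfect matchings of eight points, ordered lexicographically by their
sets of right endpoints. -/
def matching : Fin 14 → Fin 4 → Fin 8 × Fin 8 :=
  ![![(0, 1), (2, 3), (4, 5), (6, 7)],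
    ![(0, 1), (2, 3), (4, 7), (5, 6)],
    ![(0, 1), (2, 5), (3, 4), (6, 7)],
    ![(0, 1), (2, 7), (3, 4), (5, 6)],
    ![(0, 1), (2, 7), (3, 6), (4, 5)],
    ![(0, 3), (1, 2), (4, 5), (6, 7)],
    ![(0, 3), (1, 2), (4, 7), (5, 6)],
    ![(0, 5), (1, 2), (3, 4), (6, 7)],
    ![(0, 7), (1, 2), (3, 4), (5, 6)],
    ![(0, 7), (1, 2), (3, 6), (4, 5)],
    ![(0, 5), (1, 4), (2, 3), (6, 7)],
    ![(0, 7), (1, 4), (2, 3), (5, 6)],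
    ![(0, 7), (1, 6), (2, 3), (4, 5)],
    ![(0, 7), (1, 6), (2, 5), (3, 4)]]

/-- The set of right endpoints of a matching. -/
def closers (m : Fin 14) : Finset (Fin 8) := Finset.univ.image fun j => (matching m j).2

/-- The graph monomial of a matching. -/
noncomputable def matchingForm (k : Type) [Field k] (m : Fin 14) : PtRing k 8 :=
  ∏ j, bracket k 8 (matching m j).1 (matching m j).2

theorem subst_bracket (k : Type) [Field k] (g : Matrix (Fin 2) (Fin 2) k) (hg : g.det = 1)
    (a b : Fin 8) : subst k 8 g (bracket k 8 a b) = bracket k 8 a b := by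
  rw [Matrix.det_fin_two] at hg
  have h := congrArg (C : k → PtRing k 8) hg
  simp only [map_sub, map_mul, map_one] at h
  simp only [subst, bracket, map_sub, map_mul, aeval_X, if_true, one_ne_zero, if_false]
  linear_combination (X (a, 0) * X (b, 1) - X (b, 0) * X (a, 1)) * h

theorem matchingForm_mem (k : Type) [Field k] (m : Fin 14) :
    matchingForm k m ∈ Rv k 8 fun _ => 1 := by
  refine ⟨(Submodule.mem_iInf _).mpr fun g => ?_, ?_⟩
  · rw [LinearMap.mem_ker, LinearMap.sub_apply, sub_eq_zero]
    simp [matchingForm, map_prod, subst_bracket k g.1 g.2]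
  · have hb : ∀ a b : Fin 8, IsWeightedHomogeneous
        (fun p : Fin 8 × Fin 2 => Finsupp.single p.1 1) (bracket k 8 a b)
        (Finsupp.single a 1 + Finsupp.single b 1) := by
      intro a b
      refine IsWeightedHomogeneous.sub ?_ ?_
      · exact (isWeightedHomogeneous_X k _ (a, 0)).mul (isWeightedHomogeneous_X k _ (b, 1))
      · rw [add_comm]
        exact (isWeightedHomogeneous_X k _ (b, 0)).mul (isWeightedHomogeneous_X k _ (a, 1))
    have h := IsWeightedHomogeneous.prod Finset.univ _ _
      (fun j _ => hb (matching m j).1 (matching m j).2)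
    have hw : (Finsupp.equivFunOnFinite.symm fun _ => 1 : Fin 8 →₀ ℕ) = ∑ j,
        (Finsupp.single (matching m j).1 1 + Finsupp.single (matching m j).2 1) := by
      clear h
      ext i
      simp only [Finsupp.finsetSum_apply, Finsupp.add_apply, Finsupp.single_apply,
        Finsupp.equivFunOnFinite_symm_apply_apply]
      revert i m
      decide
    rw [hw]
    exact h

/-- The value of the `m`-th matching form at `e_S`, with `S` the right endpoints of the `m'`-th
matching. -/
def entry (m m' : Fin 14) : ℤ :=
  ∏ j, (pt ℤ (closers m') ((matching m j).1, 0) * pt ℤ (closers m') ((matching m j).2, 1)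
    - pt ℤ (closers m') ((matching m j).2, 0) * pt ℤ (closers m') ((matching m j).1, 1))

theorem eval_matchingForm (k : Type) [Field k] (m m' : Fin 14) :
    eval (pt k (closers m')) (matchingForm k m) = (entry m m' : k) := by
  have h : ∀ (S : Finset (Fin 8)) q, pt k S q = (pt ℤ S q : k) := by
    intro S q; simp only [pt]; split_ifs <;> simp
  simp [matchingForm, entry, bracket, h, map_prod]

theorem det_entry (k : Type) [Field k] :
    (Matrix.of fun m m' => (entry m m' : k)).det = 1 := by
  have h0 : ∀ m m' : Fin 14, m < m' → entry m m' = 0 := by decide +kernel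
  have h1 : ∀ m : Fin 14, entry m m = 1 := by decide +kernel
  rw [Matrix.det_of_isLowerTriangular]
  · simp [h1]
  · intro m m' h
    simp [h0 m m' h]

theorem linearIndependent_of_det {k ι V : Type} [Field k] [Fintype ι] [DecidableEq ι]
    [AddCommGroup V] [Module k V] (v : ι → V) (ev : V →ₗ[k] (ι → k))
    (h : (Matrix.of fun i j => ev (v i) j).det ≠ 0) : LinearIndependent k v :=
  LinearIndependent.of_comp ev (Matrix.linearIndependent_rows_of_det_ne_zero h)

/-- The values of an invariant at the points `e_S`, for `S` the sets of right endpoints of the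
non-crossing matchings. -/
noncomputable def evalClosers (k : Type) [Field k] : ↥(Rv k 8 fun _ => 1) →ₗ[k] (Fin 14 → k) where
  toFun f m' := eval (pt k (closers m')) f.1
  map_add' f g := by ext; simp
  map_smul' c f := by ext; simp

theorem matchingForm_linearIndependent (k : Type) [Field k] :
    LinearIndependent k fun m => (⟨matchingForm k m, matchingForm_mem k m⟩ :
      ↥(Rv k 8 fun _ => 1)) := by
  refine linearIndependent_of_det _ (evalClosers k) ?_
  have e : (Matrix.of fun m m' => evalClosers k ⟨matchingForm k m, matchingForm_mem k m⟩ m')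
      = Matrix.of fun m m' => (entry m m' : k) := by
    ext m m'
    exact eval_matchingForm k m m'
  rw [e, det_entry]
  exact one_ne_zero

/-- For eight points, the space of invariants of multidegree `(1,…,1)` has dimension 14. -/
theorem stmt11 (k : Type) [Field k] [CharZero k] :
    Module.finrank k ↥(Rv k 8 fun _ => 1) = 14 := by
  have hfin : Module.Finite k ↥(Rv k 8 fun _ => 1) :=
    Module.Finite.of_injective (values k) (values_injective k)
  apply le_antisymm
  · rw [← finrank_ker_incl k]
    exact LinearMap.finrank_le_finrank_of_injective (values_injective k)
  · simpa using (matchingForm_linearIndependent k).fintype_card_le_finrank
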